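/- For every real α with 0 ≤ α < 1, ∫_{-∞}^{∞} ₕe(-α x²) e^{-x²} dx = √π · (1 + ∑_{r=1}^∞ C(-1/2, r) α^r h_r), where C(-1/2, r) = (-1/2)(-1/2 - 1)⋯(-1/2 - r + 1)/r! is the generalized binomial coefficient. -/

import Mathlib

/-!
Termwise, `∫ (-x²)ⁿ/n! e^{-x²} dx = (-1)ⁿ Γ(n + 1/2)/n! = C(-1/2, n) √π`, because both sides satisfy
the same recurrence in `n`. Integrating against `e^{-x²}` thus sends the exponential generating
function of `(aₙ)`, evaluated at `-x²`, to `√π ∑ C(-1/2, n) aₙ`. Each term has constant sign, so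
absolute convergence of this series is exactly what Fubini requires to integrate termwise; for
`aₙ = αⁿ hₙ` it follows from `|C(-1/2, n)| ≤ 1` and `hₙ ≤ n`.
-/

open Real MeasureTheory

/-- The `n`-th harmonic number `h_n = ∑_{r=1}^n 1/r`. -/
noncomputable def harm (n : ℕ) : ℝ := ∑ r ∈ Finset.range n, 1 / (r + 1 : ℝ)

/-- The harmonic based exponential function `ₕe(x) = 1 + ∑_{n=1}^∞ h_n x^n / n!`. -/
noncomputable def he (x : ℝ) : ℝ :=
  1 + ∑' n : ℕ, harm (n + 1) * x ^ (n + 1) / (Nat.factorial (n + 1) : ℝ)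

/-- The generalized binomial coefficient
`C(-1/2, r) = (-1/2)(-1/2 - 1)⋯(-1/2 - r + 1)/r!`. -/
noncomputable def genBinomHalf (r : ℕ) : ℝ :=
  (∏ i ∈ Finset.range r, (-(1:ℝ)/2 - i)) / (Nat.factorial r : ℝ)

theorem integrable_pow_mul_exp_neg_mul_sq {b : ℝ} (hb : 0 < b) (n : ℕ) :
    Integrable fun x : ℝ => x ^ n * exp (-b * x ^ 2) := by
  simpa only [rpow_natCast] using
    integrable_rpow_mul_exp_neg_mul_sq hb (s := n) (neg_one_lt_zero.trans_le n.cast_nonneg)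

theorem integral_pow_two_mul_mul_exp_neg_mul_sq {b : ℝ} (hb : 0 < b) (n : ℕ) :
    ∫ x : ℝ, x ^ (2 * n) * exp (-b * x ^ 2) = b ^ (-(n + 1 / 2 : ℝ)) * Gamma (n + 1 / 2) := by
  have half_line := integral_rpow_mul_exp_neg_mul_rpow (p := 2) (q := (2 * n : ℕ)) two_pos
    (neg_one_lt_zero.trans_le (Nat.cast_nonneg _)) hb
  have exponent : (((2 * n : ℕ) : ℝ) + 1) / 2 = n + 1 / 2 := by push_cast; ring
  simp only [rpow_natCast, rpow_two, neg_div, exponent] at half_line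
  have even := integral_comp_abs (f := fun x : ℝ => x ^ (2 * n) * exp (-b * x ^ 2))
  simp only [sq_abs, pow_mul] at even half_line ⊢
  rw [even, half_line]
  ring

theorem genBinomHalf_zero : genBinomHalf 0 = 1 := by simp [genBinomHalf]

theorem genBinomHalf_succ (n : ℕ) :
    genBinomHalf (n + 1) = -((n + 1 / 2) / (n + 1)) * genBinomHalf n := by
  rw [genBinomHalf, genBinomHalf, Finset.prod_range_succ, Nat.factorial_succ]
  push_cast
  field_simp
  ring

theorem abs_genBinomHalf_le_one (n : ℕ) : |genBinomHalf n| ≤ 1 := by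
  induction n with
  | zero => simp [genBinomHalf_zero]
  | succ n ih =>
    have ratio_le_one : |-((n + 1 / 2 : ℝ) / (n + 1))| ≤ 1 := by
      rw [abs_neg, abs_of_nonneg (by positivity)]
      exact div_le_one_of_le₀ (by linarith) (by positivity)
    rw [genBinomHalf_succ, abs_mul]
    exact mul_le_one₀ ratio_le_one (abs_nonneg _) ih

theorem Gamma_nat_add_half_eq_genBinomHalf (n : ℕ) :
    Gamma (n + 1 / 2) = (-1) ^ n * n.factorial * genBinomHalf n * √π := by
  induction n with
  | zero => simpa [genBinomHalf_zero] using Gamma_one_half_eq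
  | succ n ih =>
    rw [Nat.cast_succ, add_right_comm, Gamma_add_one (by positivity), ih, genBinomHalf_succ,
      Nat.factorial_succ]
    push_cast
    field_simp
    ring

theorem neg_sq_pow_div_factorial_mul_exp_eq (n : ℕ) (x : ℝ) :
    (-x ^ 2) ^ n / n.factorial * exp (-x ^ 2) =
      (-1) ^ n / n.factorial * (x ^ (2 * n) * exp (-1 * x ^ 2)) := by
  rw [neg_pow, pow_mul, neg_one_mul]
  ring

theorem integrable_neg_sq_pow_div_factorial_mul_exp (n : ℕ) :
    Integrable fun x : ℝ => (-x ^ 2) ^ n / n.factorial * exp (-x ^ 2) := by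
  simp only [neg_sq_pow_div_factorial_mul_exp_eq]
  exact (integrable_pow_mul_exp_neg_mul_sq one_pos _).const_mul _

theorem integral_neg_sq_pow_div_factorial_mul_exp (n : ℕ) :
    ∫ x : ℝ, (-x ^ 2) ^ n / n.factorial * exp (-x ^ 2) = genBinomHalf n * √π := by
  simp only [neg_sq_pow_div_factorial_mul_exp_eq]
  rw [integral_const_mul, integral_pow_two_mul_mul_exp_neg_mul_sq one_pos, one_rpow,
    Gamma_nat_add_half_eq_genBinomHalf]
  field_simp
  rw [← pow_mul, mul_comm n, pow_mul, neg_one_sq, one_pow, one_mul]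

theorem integral_norm_neg_sq_pow_div_factorial_mul_exp (n : ℕ) :
    ∫ x : ℝ, ‖(-x ^ 2) ^ n / n.factorial * exp (-x ^ 2)‖ = |genBinomHalf n| * √π := by
  have norm_eq (x : ℝ) : ‖(-x ^ 2) ^ n / n.factorial * exp (-x ^ 2)‖ =
      (-1) ^ n * ((-x ^ 2) ^ n / n.factorial * exp (-x ^ 2)) := by
    rw [← mul_assoc, ← mul_div_assoc, ← mul_pow, neg_one_mul, neg_neg]
    simp
  have integral_eq : ∫ x : ℝ, ‖(-x ^ 2) ^ n / n.factorial * exp (-x ^ 2)‖ =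
      (-1) ^ n * (genBinomHalf n * √π) := by
    simp only [norm_eq, integral_const_mul, integral_neg_sq_pow_div_factorial_mul_exp]
  rw [← abs_of_nonneg (integral_nonneg fun _ => norm_nonneg _), integral_eq]
  simp [abs_mul, abs_of_nonneg (sqrt_nonneg π)]

theorem hasSum_integral_mul_exp_neg_sq {a : ℕ → ℝ} {f : ℝ → ℝ}
    (ha : Summable fun n => genBinomHalf n * a n)
    (hf : ∀ x, HasSum (fun n => a n * (-x ^ 2) ^ n / n.factorial) (f x)) :
    HasSum (fun n => √π * (genBinomHalf n * a n)) (∫ x : ℝ, f x * exp (-x ^ 2)) := by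
  let F (n : ℕ) (x : ℝ) : ℝ := a n * ((-x ^ 2) ^ n / n.factorial * exp (-x ^ 2))
  have F_integrable (n : ℕ) : Integrable (F n) :=
    (integrable_neg_sq_pow_div_factorial_mul_exp n).const_mul _
  have F_integral (n : ℕ) : ∫ x, F n x = √π * (genBinomHalf n * a n) := by
    simp only [F, integral_const_mul, integral_neg_sq_pow_div_factorial_mul_exp]
    ring
  have F_integral_norm (n : ℕ) : ∫ x, ‖F n x‖ = √π * |genBinomHalf n * a n| := by
    simp only [F, norm_mul (a n), integral_const_mul,
      integral_norm_neg_sq_pow_div_factorial_mul_exp]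
    rw [abs_mul, norm_eq_abs]
    ring
  have F_tsum (x : ℝ) : ∑' n, F n x = f x * exp (-x ^ 2) := by
    simpa only [F, mul_div_assoc, mul_assoc] using ((hf x).mul_right (exp (-x ^ 2))).tsum_eq
  have F_summable : Summable fun n => ∫ x, ‖F n x‖ := by
    simpa only [F_integral_norm] using ha.abs.mul_left √π
  simpa only [F_integral, F_tsum] using
    hasSum_integral_of_summable_integral_norm F_integrable F_summable

/-- The coefficients of `ₕe` as an exponential generating function, `ₕe(x) = ∑ heCoeff n xⁿ/n!`.
They are the harmonic numbers except at `0`, where `harm 0 = 0` but the constant term is `1`. -/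
noncomputable def heCoeff : ℕ → ℝ := Function.update harm 0 1

theorem heCoeff_zero : heCoeff 0 = 1 := Function.update_self ..

theorem heCoeff_succ (n : ℕ) : heCoeff (n + 1) = harm (n + 1) :=
  Function.update_of_ne n.succ_ne_zero ..

theorem harm_nonneg (n : ℕ) : 0 ≤ harm n :=
  Finset.sum_nonneg fun _ _ => by positivity

theorem harm_le (n : ℕ) : harm n ≤ n := by
  have term_le_one (r : ℕ) : 1 / (r + 1 : ℝ) ≤ 1 :=
    div_le_one_of_le₀ (by linarith [r.cast_nonneg (α := ℝ)]) (by positivity)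
  simpa [harm] using Finset.sum_le_card_nsmul (Finset.range n) _ 1 fun r _ => term_le_one r

theorem abs_heCoeff_le (n : ℕ) : |heCoeff n| ≤ n + 1 := by
  cases n with
  | zero => simp [heCoeff_zero]
  | succ n =>
    rw [heCoeff_succ, abs_of_nonneg (harm_nonneg _)]
    exact (harm_le _).trans (le_add_of_nonneg_right zero_le_one)

theorem summable_heCoeff_mul_pow_div_factorial (x : ℝ) :
    Summable fun n => heCoeff n * x ^ n / n.factorial := by
  refine .of_norm_bounded (summable_pow_div_factorial (2 * |x|)) fun n => ?_
  have coeff_le : |heCoeff n| ≤ 2 ^ n :=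
    (abs_heCoeff_le n).trans (mod_cast Nat.lt_two_pow_self)
  rw [norm_div, norm_mul, norm_pow, norm_eq_abs, norm_eq_abs, norm_natCast, mul_pow]
  gcongr

theorem hasSum_he (x : ℝ) : HasSum (fun n => heCoeff n * x ^ n / n.factorial) (he x) := by
  have summable := summable_heCoeff_mul_pow_div_factorial x
  convert summable.hasSum using 1
  rw [summable.tsum_eq_zero_add]
  simp [he, heCoeff_zero, heCoeff_succ]

theorem summable_genBinomHalf_mul_pow_mul_heCoeff {α : ℝ} (hα : |α| < 1) :
    Summable fun n => genBinomHalf n * (α ^ n * heCoeff n) := by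
  have majorant_summable : Summable fun n : ℕ => (n + 1) * |α| ^ n := by
    simpa using summable_choose_mul_geometric_of_norm_lt_one 1 (r := |α|) (by simpa using hα)
  refine .of_norm_bounded majorant_summable fun n => ?_
  calc ‖genBinomHalf n * (α ^ n * heCoeff n)‖
      = |genBinomHalf n| * (|α| ^ n * |heCoeff n|) := by simp only [norm_eq_abs, abs_mul, abs_pow]
    _ ≤ 1 * (|α| ^ n * (n + 1)) := by
        gcongr
        · exact abs_genBinomHalf_le_one n
        · exact abs_heCoeff_le n
    _ = (n + 1) * |α| ^ n := by ring

theorem he_gaussian_squared_integral_general (α : ℝ) (hα : |α| < 1) :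
    (∫ x : ℝ, he (-α * x ^ 2) * exp (-x ^ 2)) =
      √π * (1 + ∑' r : ℕ, genBinomHalf (r + 1) * α ^ (r + 1) * harm (r + 1)) := by
  have summable := summable_genBinomHalf_mul_pow_mul_heCoeff hα
  have he_expansion (x : ℝ) :
      HasSum (fun n => α ^ n * heCoeff n * (-x ^ 2) ^ n / n.factorial) (he (-α * x ^ 2)) := by
    convert hasSum_he (-α * x ^ 2) using 3 with n
    rw [neg_mul_comm, mul_pow]
    ring
  rw [← (hasSum_integral_mul_exp_neg_sq summable he_expansion).tsum_eq, tsum_mul_left,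
    summable.tsum_eq_zero_add]
  simp only [genBinomHalf_zero, heCoeff_zero, heCoeff_succ, pow_zero, mul_one, mul_assoc]

/-- For `0 ≤ α < 1`,
`∫_{-∞}^{∞} ₕe(-αx²) e^{-x²} dx = √π (1 + ∑_{r=1}^∞ C(-1/2,r) α^r h_r)`. -/
theorem he_gaussian_squared_integral (α : ℝ) (h0 : 0 ≤ α) (h1 : α < 1) :
    (∫ x : ℝ, he (-α * x ^ 2) * Real.exp (-x ^ 2)) =
      Real.sqrt π *
        (1 + ∑' r : ℕ, genBinomHalf (r + 1) * α ^ (r + 1) * harm (r + 1)) :=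
  he_gaussian_squared_integral_general α (by rwa [abs_of_nonneg h0])
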